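/- arXiv:1907.07589 — 3 statements merged into one kernel-verified Lean document; each statement's English description precedes it below -/
import Mathlib

section
/- Let X and Y be Archimedean Riesz spaces (Archimedean lattice ordered real vector spaces), Z a linear subspace of X, and T : Z → Y a linear operator. The following are equivalent: (1) for every sequence (x_n) in Z with x_n →u 0 in X, one has T x_n →u 0 in Y; (2) for every sequence (x_n) in Z with x_n →u 0 in X, the sequence (T x_n) is order bounded in Y, i.e., there exists a ∈ Y with |T x_n| ≤ a for all n. -/
/-! The implication from order bounded images to uniform convergence rests on the fact that
uniform null sequences can be sped up: if `x_n →u 0` with regulator `e`, there are naturals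
`k_n → ∞` with `k_n x_n →u 0` (take `k_n` to be the largest `k ≤ n` with `(k + 1)² |x_n| ≤ e`, so that
`k_n |x_n| ≤ e / (k_n + 1)`). Order boundedness of `k_n T x_n` by `a` then gives
`|T x_n| ≤ a / k_n`. Conversely, a uniformly null sequence is eventually below its regulator, and the
finitely many remaining terms are absorbed by a finite sum. -/

section aux

variable {E : Type*} [Lattice E] [AddCommGroup E] [Module ℝ E] [PosSMulMono ℝ E]

lemma abs_smul_le_smul_abs {c : ℝ} (hc : 0 ≤ c) (x : E) : |c • x| ≤ c • |x| := by
  refine sup_le (smul_le_smul_of_nonneg_left (le_abs_self x) hc) ?_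
  rw [← smul_neg]
  exact smul_le_smul_of_nonneg_left (neg_le_abs x) hc

variable [CovariantClass E E (· + ·) (· ≤ ·)]

lemma smul_mono_scalar {r s : ℝ} (h : r ≤ s) {e : E} (he : 0 ≤ e) : r • e ≤ s • e := by
  have h1 : (s - r) • (0 : E) ≤ (s - r) • e :=
    smul_le_smul_of_nonneg_left he (sub_nonneg.2 h)
  rwa [smul_zero, sub_smul, sub_nonneg] at h1

lemma abs_le_smul_of_abs_smul_le {c ε : ℝ} (hc : 0 < c) (hε : c⁻¹ ≤ ε) {x a : E}
    (h : |c • x| ≤ a) : |x| ≤ ε • a := by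
  have h1 := abs_smul_le_smul_abs (inv_nonneg.2 hc.le) (c • x)
  rw [inv_smul_smul₀ hc.ne'] at h1
  exact (h1.trans (smul_le_smul_of_nonneg_left h (inv_nonneg.2 hc.le))).trans
    (smul_mono_scalar hε ((abs_nonneg _).trans h))

/-- A sequence converging uniformly to zero may be multiplied by suitable naturals tending to
infinity and still converges uniformly to zero, with the same regulator. -/
lemma exists_speedup (x : ℕ → E) {e : E} (he : 0 ≤ e)
    (h : ∀ ε : ℝ, 0 < ε → ∃ N : ℕ, ∀ n ≥ N, |x n| ≤ ε • e) :
    ∃ k : ℕ → ℕ, (∀ K, ∃ N, ∀ n ≥ N, K ≤ k n) ∧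
      ∀ ε : ℝ, 0 < ε → ∃ N : ℕ, ∀ n ≥ N, |(k n : ℝ) • x n| ≤ ε • e := by
  classical
  let P : ℕ → ℕ → Prop := fun n k => |x n| ≤ (((k : ℝ) + 1) ^ 2)⁻¹ • e
  have key : ∀ K, ∃ N, ∀ n ≥ N,
      K ≤ Nat.findGreatest (P n) n ∧ P n (Nat.findGreatest (P n) n) := by
    intro K
    obtain ⟨N, hN⟩ := h (((K : ℝ) + 1) ^ 2)⁻¹ (by positivity)
    refine ⟨max N K, fun n hn => ?_⟩
    have hP : P n K := hN n (le_of_max_le_left hn)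
    have hK : K ≤ n := le_of_max_le_right hn
    exact ⟨Nat.le_findGreatest hK hP, Nat.findGreatest_spec hK hP⟩
  refine ⟨fun n => Nat.findGreatest (P n) n, fun K => ?_, fun ε hε => ?_⟩
  · obtain ⟨N, hN⟩ := key K
    exact ⟨N, fun n hn => (hN n hn).1⟩
  · obtain ⟨K, hK⟩ := exists_nat_gt ε⁻¹
    obtain ⟨N, hN⟩ := key K
    refine ⟨N, fun n hn => ?_⟩
    obtain ⟨h1, h2⟩ := hN n hn
    dsimp only
    generalize Nat.findGreatest (P n) n = m at h1 h2
    have hm : (K : ℝ) ≤ m := by exact_mod_cast h1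
    have hm0 : (0 : ℝ) ≤ m := m.cast_nonneg
    refine (abs_smul_le_smul_abs hm0 _).trans ((smul_le_smul_of_nonneg_left h2 hm0).trans ?_)
    rw [smul_smul]
    refine smul_mono_scalar ?_ he
    rw [← div_eq_mul_inv, div_le_iff₀ (by positivity)]
    have h3 : 1 ≤ ε * m := by
      have := (inv_lt_iff_one_lt_mul₀ hε).1 (hK.trans_le hm)
      linarith
    nlinarith [mul_nonneg hε.le hm0]

end aux

/-- Let `X` and `Y` be Archimedean Riesz spaces, `Z` a linear subspace of `X`,
and `T : Z → Y` a linear operator.  TFAE: (1) `x_n →u 0` in `X` implies `T x_n →u 0` in `Y`;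
(2) `x_n →u 0` in `X` implies `(T x_n)` is order bounded in `Y`. -/
theorem stmt5
    {X : Type*} [Lattice X] [AddCommGroup X] [Module ℝ X]
    [CovariantClass X X (· + ·) (· ≤ ·)] [PosSMulMono ℝ X]
    {Y : Type*} [Lattice Y] [AddCommGroup Y] [Module ℝ Y]
    [CovariantClass Y Y (· + ·) (· ≤ ·)] [PosSMulMono ℝ Y]
    (harchX : ∀ x y : X, (∀ n : ℕ, n • x ≤ y) → x ≤ 0)
    (harchY : ∀ x y : Y, (∀ n : ℕ, n • x ≤ y) → x ≤ 0)
    (Z : Submodule ℝ X) (T : Z →ₗ[ℝ] Y) :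
    (∀ x : ℕ → Z,
      (∃ e : X, 0 ≤ e ∧ ∀ ε : ℝ, 0 < ε → ∃ N : ℕ, ∀ n ≥ N, |(x n : X)| ≤ ε • e) →
      (∃ a : Y, 0 ≤ a ∧ ∀ ε : ℝ, 0 < ε → ∃ N : ℕ, ∀ n ≥ N, |T (x n)| ≤ ε • a)) ↔
    (∀ x : ℕ → Z,
      (∃ e : X, 0 ≤ e ∧ ∀ ε : ℝ, 0 < ε → ∃ N : ℕ, ∀ n ≥ N, |(x n : X)| ≤ ε • e) →
      (∃ a : Y, ∀ n : ℕ, |T (x n)| ≤ a)) := by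
  have : IsOrderedAddMonoid Y := ⟨fun a b h c => by gcongr, fun a b h c => by gcongr⟩
  constructor
  · intro H x hx
    obtain ⟨a, ha, h⟩ := H x hx
    obtain ⟨N, hN⟩ := h 1 one_pos
    have hs : ∀ i ∈ Finset.range N, 0 ≤ |T (x i)| := fun i _ => abs_nonneg _
    refine ⟨a + ∑ i ∈ Finset.range N, |T (x i)|, fun n => ?_⟩
    rcases lt_or_ge n N with hn | hn
    · exact (Finset.single_le_sum hs (Finset.mem_range.2 hn)).trans (le_add_of_nonneg_left ha)
    · have h1 := hN n hn
      rw [one_smul] at h1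
      exact h1.trans (le_add_of_nonneg_right (Finset.sum_nonneg hs))
  · rintro H x ⟨e, he, hx⟩
    obtain ⟨k, hk, hkx⟩ := exists_speedup (fun n => (x n : X)) he hx
    obtain ⟨a, ha⟩ := H (fun n => (k n : ℝ) • x n) ⟨e, he, hkx⟩
    refine ⟨a, (abs_nonneg _).trans (ha 0), fun ε hε => ?_⟩
    obtain ⟨K, hK⟩ := exists_nat_gt ε⁻¹
    obtain ⟨N, hN⟩ := hk K
    refine ⟨N, fun n hn => ?_⟩
    have hlt : ε⁻¹ < (k n : ℝ) := hK.trans_le (by exact_mod_cast hN n hn)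
    have hpos : (0 : ℝ) < k n := (inv_pos.2 hε).trans hlt
    have h1 := ha n
    simp only [map_smul] at h1
    exact abs_le_smul_of_abs_smul_le hpos (inv_le_of_inv_le₀ hε hlt.le) h1
end

section
/- Let μ be a measure on a measurable space, let 1 ≤ p < ∞, and let (f_k) be a sequence in the real Lebesgue space L_p(μ) with ‖f_k‖_p = 1 for all k. Suppose (f_k) is absolute with some constant A ≥ 1, i.e., ‖∑_{k=1}^m |α_k f_k|‖_p ≤ A‖∑_{k=1}^m α_k f_k‖_p for every m and all scalars α_1,…,α_m. Then (f_k) is equivalent to the unit vector basis of ℓ_p: there exists a constant C ≥ 1 such that for every m and all scalars α_1,…,α_m, (1/C)·(∑_{k=1}^m |α_k|^p)^{1/p} ≤ ‖∑_{k=1}^m α_k f_k‖_p ≤ C·(∑_{k=1}^m |α_k|^p)^{1/p}. -/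
/-!
The lower estimate is immediate: for `g_k = α_k f_k` one has `∑ |g_k|^p ≤ (∑ |g_k|)^p` pointwise, so
`∑ |α_k|^p ≤ ‖∑ |g_k|‖^p`, and absoluteness bounds the right-hand side.

For the upper estimate put `S = ∑ |g_k|`. Absoluteness gives `‖S‖^p ≤ A^p ‖∑ ε_k g_k‖^p` for every
choice of signs `ε`. Averaging over all signs and using the pointwise inequality
`𝔼 |∑ ε_k a_k|^p ≤ δ (∑ |a_k|)^p + C(δ, p) ∑ |a_k|^p` (`exists_sum_signs_le`), integration yields
`‖S‖^p ≤ A^p (δ ‖S‖^p + C ∑ |α_k|^p)`; for `δ = 1 / (2 A^p)` the first term is absorbed on the left.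

The pointwise inequality replaces Khintchine's. For `p ≤ 2` it holds without the first term,
by induction from the two-point inequality `|x + y|^p + |x - y|^p ≤ 2 (|x|^p + |y|^p)`. For `p > 2`
one uses `|∑ ε_k a_k|^p ≤ s^(p-2) |∑ ε_k a_k|^2` with `s = ∑ |a_k|`, so that the average is at most
`∑ s^(p-2) a_k^2`, and splits each term according to whether `|a_k| ≤ δ s`.
-/

open MeasureTheory
open scoped ENNReal

/-! ### Sign averages of scalar sums -/

/-- The choice of signs that is `-1` exactly on `T`. -/
def signOf (T : Finset ℕ) (k : ℕ) : ℝ := if k ∈ T then -1 else 1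

lemma abs_signOf (T : Finset ℕ) (k : ℕ) : |signOf T k| = 1 := by
  unfold signOf; split_ifs <;> simp

lemma sum_signs_le_of_two_point (φ : ℝ → ℝ) (h0 : φ 0 ≤ 0)
    (hφ : ∀ x y, φ (x + y) + φ (x - y) ≤ 2 * (φ x + φ y)) (a : ℕ → ℝ) (m : ℕ) :
    ∑ T ∈ (Finset.range m).powerset, φ (∑ k ∈ Finset.range m, signOf T k * a k)
      ≤ 2 ^ m * ∑ k ∈ Finset.range m, φ (a k) := by
  induction m with
  | zero => simpa using h0
  | succ m ih =>
    have key : ∀ T ∈ (Finset.range m).powerset,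
        φ (∑ k ∈ Finset.range (m + 1), signOf T k * a k)
          + φ (∑ k ∈ Finset.range (m + 1), signOf (insert m T) k * a k)
        ≤ 2 * (φ (∑ k ∈ Finset.range m, signOf T k * a k) + φ (a m)) := by
      intro T hT
      have hm : m ∉ T := fun h => by
        simpa using Finset.mem_powerset.1 hT h
      have h1 : ∑ k ∈ Finset.range m, signOf (insert m T) k * a k
          = ∑ k ∈ Finset.range m, signOf T k * a k := by
        refine Finset.sum_congr rfl fun k hk => ?_
        have : k ≠ m := (Finset.mem_range.1 hk).ne
        simp [signOf, this]
      rw [Finset.sum_range_succ, Finset.sum_range_succ, h1]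
      simpa [signOf, hm, sub_eq_add_neg] using hφ (∑ k ∈ Finset.range m, signOf T k * a k) (a m)
    have hpow : (Finset.range (m + 1)).powerset = (insert m (Finset.range m)).powerset := by
      rw [Finset.range_add_one]
    rw [hpow, Finset.sum_powerset_insert (by simp), ← Finset.sum_add_distrib]
    refine (Finset.sum_le_sum key).trans ?_
    rw [← Finset.mul_sum, Finset.sum_add_distrib, Finset.sum_range_succ]
    simp only [Finset.sum_const, Finset.card_powerset, Finset.card_range, nsmul_eq_mul]
    push_cast
    rw [pow_succ]
    linarith

/-- A one-sided Clarkson inequality for scalars, from concavity and subadditivity of `t ↦ t^(p/2)`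
applied to the squares. -/
lemma two_point_rpow {p : ℝ} (hp : 1 ≤ p) (hp2 : p ≤ 2) (x y : ℝ) :
    |x + y| ^ p + |x - y| ^ p ≤ 2 * (|x| ^ p + |y| ^ p) := by
  have hsq : ∀ z : ℝ, |z| ^ p = (z ^ 2) ^ (p / 2) := fun z => by
    rw [← sq_abs, ← Real.rpow_natCast, ← Real.rpow_mul (abs_nonneg z)]
    congr 1; push_cast; ring
  simp only [hsq]
  have h1 := (Real.concaveOn_rpow (p := p / 2) (by linarith) (by linarith)).2
    (Set.mem_Ici.2 (sq_nonneg (x + y)))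
    (Set.mem_Ici.2 (sq_nonneg (x - y)))
    (show (0 : ℝ) ≤ 1 / 2 by norm_num) (show (0 : ℝ) ≤ 1 / 2 by norm_num) (by norm_num)
  simp only [smul_eq_mul] at h1
  rw [show 1 / 2 * (x + y) ^ 2 + 1 / 2 * (x - y) ^ 2 = x ^ 2 + y ^ 2 by ring] at h1
  have h2 := Real.rpow_add_le_add_rpow (sq_nonneg x) (sq_nonneg y)
    (show 0 ≤ p / 2 by linarith) (show p / 2 ≤ 1 by linarith)
  linarith

/-- The average of `|∑ ± a_k|^p` over all signs is at most an arbitrarily small multiple of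
`(∑ |a_k|)^p` plus a constant multiple of `∑ |a_k|^p`. -/
lemma exists_sum_signs_le {p : ℝ} (hp : 1 ≤ p) {δ : ℝ} (hδ : 0 < δ) :
    ∃ C : ℝ, 0 ≤ C ∧ ∀ (m : ℕ) (a : ℕ → ℝ),
      ∑ T ∈ (Finset.range m).powerset, |∑ k ∈ Finset.range m, signOf T k * a k| ^ p
        ≤ 2 ^ m * (δ * (∑ k ∈ Finset.range m, |a k|) ^ p
          + C * ∑ k ∈ Finset.range m, |a k| ^ p) := by
  rcases le_or_gt p 2 with hp2 | hp2
  · refine ⟨1, zero_le_one, fun m a => ?_⟩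
    refine (sum_signs_le_of_two_point (fun x => |x| ^ p) ?_ (two_point_rpow hp hp2) a m).trans ?_
    · simp [Real.zero_rpow (by linarith : p ≠ 0)]
    · gcongr
      have : 0 ≤ δ * (∑ k ∈ Finset.range m, |a k|) ^ p := by positivity
      linarith
  · refine ⟨(δ⁻¹) ^ (p - 2), by positivity, fun m a => ?_⟩
    set s := ∑ k ∈ Finset.range m, |a k| with hs
    have hs0 : 0 ≤ s := Finset.sum_nonneg fun _ _ => abs_nonneg _
    have hsplit : ∀ t : ℝ, 0 ≤ t → t ^ p = t ^ (p - 2) * t ^ 2 := fun t ht => by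
      rw [← Real.rpow_natCast t 2, ← Real.rpow_add_of_nonneg ht (by linarith) (by norm_num)]
      congr 1; push_cast; ring
    have h1 : ∀ T ∈ (Finset.range m).powerset,
        |∑ k ∈ Finset.range m, signOf T k * a k| ^ p
          ≤ s ^ (p - 2) * (∑ k ∈ Finset.range m, signOf T k * a k) ^ 2 := fun T _ => by
      have hle : |∑ k ∈ Finset.range m, signOf T k * a k| ≤ s := by
        refine (Finset.abs_sum_le_sum_abs _ _).trans (le_of_eq ?_)
        simp [abs_mul, abs_signOf, hs]
      rw [hsplit _ (abs_nonneg _), sq_abs]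
      gcongr
    have h2 := sum_signs_le_of_two_point (fun x => x ^ 2) (by simp)
      (fun x y => by nlinarith) a m
    have h3 : ∀ k ∈ Finset.range m,
        s ^ (p - 2) * a k ^ 2 ≤ δ * s ^ (p - 1) * |a k| + (δ⁻¹) ^ (p - 2) * |a k| ^ p := by
      intro k _
      rcases le_or_gt |a k| (δ * s) with h | h
      · have e : s ^ (p - 1) = s ^ (p - 2) * s := by
          rw [← Real.rpow_add_one' hs0 (by linarith)]
          congr 1; ring
        have : s ^ (p - 2) * a k ^ 2 ≤ δ * s ^ (p - 1) * |a k| := by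
          rw [e, ← sq_abs]
          calc s ^ (p - 2) * |a k| ^ 2 = s ^ (p - 2) * |a k| * |a k| := by ring
            _ ≤ s ^ (p - 2) * (δ * s) * |a k| := by gcongr
            _ = _ := by ring
        have h' : 0 ≤ (δ⁻¹) ^ (p - 2) * |a k| ^ p := by positivity
        linarith
      · have hle : s ≤ δ⁻¹ * |a k| := by
          rw [inv_mul_eq_div, le_div_iff₀ hδ]; linarith
        have : s ^ (p - 2) * a k ^ 2 ≤ (δ⁻¹) ^ (p - 2) * |a k| ^ p := by
          rw [hsplit _ (abs_nonneg _), ← mul_assoc,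
            ← Real.mul_rpow (by positivity) (abs_nonneg _), sq_abs]
          gcongr
        have h' : 0 ≤ δ * s ^ (p - 1) * |a k| := by positivity
        linarith
    calc _ ≤ ∑ T ∈ (Finset.range m).powerset,
          s ^ (p - 2) * (∑ k ∈ Finset.range m, signOf T k * a k) ^ 2 := Finset.sum_le_sum h1
      _ ≤ s ^ (p - 2) * (2 ^ m * ∑ k ∈ Finset.range m, a k ^ 2) := by
          rw [← Finset.mul_sum]; gcongr
      _ = 2 ^ m * ∑ k ∈ Finset.range m, s ^ (p - 2) * a k ^ 2 := by
          rw [← Finset.mul_sum]; ring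
      _ ≤ 2 ^ m * ∑ k ∈ Finset.range m,
          (δ * s ^ (p - 1) * |a k| + (δ⁻¹) ^ (p - 2) * |a k| ^ p) := by
          gcongr with k hk; exact h3 k hk
      _ = _ := by
          rw [Finset.sum_add_distrib, ← Finset.mul_sum, ← Finset.mul_sum, ← hs, mul_assoc,
            ← Real.rpow_add_one' hs0 (by linarith)]
          congr 4; ring

lemma sum_rpow_le_rpow_sum {p : ℝ} (hp : 1 ≤ p) (a : ℕ → ℝ) (ha : ∀ k, 0 ≤ a k) (m : ℕ) :
    ∑ k ∈ Finset.range m, a k ^ p ≤ (∑ k ∈ Finset.range m, a k) ^ p := by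
  induction m with
  | zero => simp [Real.zero_rpow (by linarith : p ≠ 0)]
  | succ m ih =>
    rw [Finset.sum_range_succ, Finset.sum_range_succ]
    have := Real.add_rpow_le_rpow_add (Finset.sum_nonneg fun k (_ : k ∈ Finset.range m) => ha k)
      (ha m) hp
    linarith

/-! ### Sums of moduli and sign averages in `L_p` -/

lemma Lp_norm_rpow {Ω : Type*} [MeasurableSpace Ω] {μ : Measure Ω}
    {p : ℝ≥0∞} [h1 : Fact (1 ≤ p)] (hp : p ≠ ⊤) (g : Lp ℝ p μ) :
    ‖g‖ ^ p.toReal = ∫ x, |g x| ^ p.toReal ∂μ := by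
  have hp0 : p ≠ 0 := (zero_lt_one.trans_le h1.out).ne'
  have hI : 0 ≤ ∫ x, |g x| ^ p.toReal ∂μ := integral_nonneg fun x => by positivity
  rw [Lp.norm_def, (Lp.memLp g).eLpNorm_eq_integral_rpow_norm hp0 hp]
  simp only [Real.norm_eq_abs]
  rw [ENNReal.toReal_ofReal (by positivity), ← Real.rpow_mul hI,
    inv_mul_cancel₀ (ENNReal.toReal_ne_zero.2 ⟨hp0, hp⟩), Real.rpow_one]

lemma Lp_integrable_rpow {Ω : Type*} [MeasurableSpace Ω] {μ : Measure Ω}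
    {p : ℝ≥0∞} [h1 : Fact (1 ≤ p)] (hp : p ≠ ⊤) (g : Lp ℝ p μ) :
    Integrable (fun x => |g x| ^ p.toReal) μ :=
  (Lp.memLp g).integrable_norm_rpow (zero_lt_one.trans_le h1.out).ne' hp

lemma coeFn_sum_abs {Ω : Type*} [MeasurableSpace Ω] {μ : Measure Ω}
    {p : ℝ≥0∞} (g : ℕ → Lp ℝ p μ) (m : ℕ) :
    ⇑(∑ k ∈ Finset.range m, |g k|) =ᵐ[μ] fun x => ∑ k ∈ Finset.range m, |g k x| := by
  filter_upwards [Lp.coeFn_fun_finsetSum (Finset.range m) (fun k => |g k|),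
    ae_all_iff.2 fun k => Lp.coeFn_abs (g k)] with x hx hx'
  rw [hx]
  exact Finset.sum_congr rfl fun k _ => hx' k

lemma sum_norm_rpow_le_norm_sum_abs {Ω : Type*} [MeasurableSpace Ω] {μ : Measure Ω}
    {p : ℝ≥0∞} [h1 : Fact (1 ≤ p)] (hp : p ≠ ⊤) (g : ℕ → Lp ℝ p μ) (m : ℕ) :
    ∑ k ∈ Finset.range m, ‖g k‖ ^ p.toReal
      ≤ ‖∑ k ∈ Finset.range m, |g k|‖ ^ p.toReal := by
  have hq : 1 ≤ p.toReal := by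
    simpa using ENNReal.toReal_mono hp h1.out
  simp only [Lp_norm_rpow hp]
  rw [← integral_finsetSum _ fun k _ => Lp_integrable_rpow hp (g k)]
  refine integral_mono_ae (integrable_finsetSum _ fun k _ => Lp_integrable_rpow hp (g k))
    (Lp_integrable_rpow hp _) ?_
  filter_upwards [coeFn_sum_abs g m] with x hx
  rw [hx, abs_of_nonneg (Finset.sum_nonneg fun _ _ => abs_nonneg _)]
  exact sum_rpow_le_rpow_sum hq _ (fun _ => abs_nonneg _) m

lemma norm_sum_le_norm_sum_abs {Ω : Type*} [MeasurableSpace Ω] {μ : Measure Ω}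
    {p : ℝ≥0∞} (g : ℕ → Lp ℝ p μ) (m : ℕ) :
    ‖∑ k ∈ Finset.range m, g k‖ ≤ ‖∑ k ∈ Finset.range m, |g k|‖ := by
  refine Lp.norm_le_norm_of_ae_le ?_
  filter_upwards [coeFn_sum_abs g m, Lp.coeFn_fun_finsetSum (Finset.range m) g] with x hx hx'
  rw [hx, hx', Real.norm_eq_abs, Real.norm_eq_abs]
  exact (Finset.abs_sum_le_sum_abs _ _).trans (le_abs_self _)

/-- The integrated form of `exists_sum_signs_le`. -/
lemma exists_sum_signs_norm_le {Ω : Type*} [MeasurableSpace Ω] (μ : Measure Ω)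
    {p : ℝ≥0∞} [h1 : Fact (1 ≤ p)] (hp : p ≠ ⊤) {δ : ℝ} (hδ : 0 < δ) :
    ∃ C : ℝ, 0 ≤ C ∧ ∀ (m : ℕ) (g : ℕ → Lp ℝ p μ),
      ∑ T ∈ (Finset.range m).powerset, ‖∑ k ∈ Finset.range m, signOf T k • g k‖ ^ p.toReal
        ≤ 2 ^ m * (δ * ‖∑ k ∈ Finset.range m, |g k|‖ ^ p.toReal
          + C * ∑ k ∈ Finset.range m, ‖g k‖ ^ p.toReal) := by
  have hq : 1 ≤ p.toReal := by
    simpa using ENNReal.toReal_mono hp h1.out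
  obtain ⟨C, hC, H⟩ := exists_sum_signs_le hq hδ
  refine ⟨C, hC, fun m g => ?_⟩
  have hint := fun g : Lp ℝ p μ => Lp_integrable_rpow hp g
  simp only [Lp_norm_rpow hp]
  rw [← integral_finsetSum _ fun k _ => hint (g k), ← integral_finsetSum _ fun T _ => hint _,
    ← integral_const_mul, ← integral_const_mul, ← integral_add, ← integral_const_mul]
  rotate_left
  · exact (hint _).const_mul _
  · exact (integrable_finsetSum _ fun k _ => hint (g k)).const_mul _
  refine integral_mono_ae (integrable_finsetSum _ fun T _ => hint _)
    ((((hint _).const_mul _).add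
      ((integrable_finsetSum _ fun k _ => hint (g k)).const_mul _)).const_mul _) ?_
  filter_upwards [coeFn_sum_abs g m,
    ae_all_iff.2 fun T : Finset ℕ => Lp.coeFn_fun_finsetSum (Finset.range m)
      (fun k => signOf T k • g k),
    ae_all_iff.2 fun T : Finset ℕ => ae_all_iff.2 fun k => Lp.coeFn_smul (signOf T k) (g k)]
    with x hx hT hTk
  simp only [hx, hT, hTk, Pi.smul_apply, smul_eq_mul]
  rw [abs_of_nonneg (Finset.sum_nonneg fun _ _ => abs_nonneg _)]
  exact H m fun k => g k x

/-! ### Equivalence with the unit vector basis of `ℓ_p` -/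

/-- Every normalized absolute sequence in `L_p(μ)` (`1 ≤ p < ∞`) is
equivalent to the unit vector basis of `ℓ_p`. -/
theorem stmt18 {Ω : Type*} [MeasurableSpace Ω] (μ : Measure Ω)
    (p : ℝ≥0∞) [Fact (1 ≤ p)] (hp : p ≠ ⊤)
    (f : ℕ → Lp ℝ p μ) (hnorm : ∀ k, ‖f k‖ = 1)
    (A : ℝ) (hA : 1 ≤ A)
    (habs : ∀ (m : ℕ) (α : ℕ → ℝ),
      ‖∑ k ∈ Finset.range m, |α k • f k|‖ ≤ A * ‖∑ k ∈ Finset.range m, α k • f k‖) :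
    ∃ C : ℝ, 1 ≤ C ∧ ∀ (m : ℕ) (α : ℕ → ℝ),
      (1 / C) * (∑ k ∈ Finset.range m, |α k| ^ p.toReal) ^ (1 / p.toReal)
          ≤ ‖∑ k ∈ Finset.range m, α k • f k‖ ∧
      ‖∑ k ∈ Finset.range m, α k • f k‖
          ≤ C * (∑ k ∈ Finset.range m, |α k| ^ p.toReal) ^ (1 / p.toReal) := by
  have h1 : 1 ≤ p := Fact.out
  have hq : 1 ≤ p.toReal := by
    simpa using ENNReal.toReal_mono hp h1
  have hq0 : 0 < p.toReal := by linarith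
  have hA0 : 0 < A := by linarith
  set q := p.toReal with hqdef
  have hAq : 0 < A ^ q := by positivity
  obtain ⟨C, hC, H⟩ := exists_sum_signs_norm_le μ hp (δ := 1 / (2 * A ^ q)) (by positivity)
  refine ⟨max A ((2 * A ^ q * C) ^ (1 / q)), le_max_of_le_left hA, fun m α => ?_⟩
  set g : ℕ → Lp ℝ p μ := fun k => α k • f k with hg
  have hgn : ∀ k, ‖g k‖ = |α k| := fun k => by simp [hg, norm_smul, hnorm]
  set S := ‖∑ k ∈ Finset.range m, |g k|‖ with hS
  set P := ∑ k ∈ Finset.range m, |α k| ^ q with hP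
  have hS0 : 0 ≤ S := norm_nonneg _
  have hP0 : 0 ≤ P := Finset.sum_nonneg fun _ _ => by positivity
  have hPS : P ≤ S ^ q := by
    have := sum_norm_rpow_le_norm_sum_abs hp g m
    simpa only [hgn] using this
  have hPS' : P ^ (1 / q) ≤ S := by
    rw [one_div]
    exact (Real.rpow_inv_le_iff_of_pos hP0 hS0 hq0).2 hPS
  have hsign : ∀ T : Finset ℕ, S ≤ A * ‖∑ k ∈ Finset.range m, signOf T k • g k‖ := fun T => by
    have h := habs m fun k => signOf T k * α k
    have e : ∀ k, |signOf T k • g k| = |g k| := fun k => by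
      unfold signOf; split_ifs <;> simp
    have e' : ∀ k, (signOf T k * α k) • f k = signOf T k • g k := fun k => mul_smul _ _ _
    simpa only [e', e] using h
  -- Sum the `p`-th powers over all sign choices; the term `S ^ q / 2` is then absorbed on the left.
  have hSP : S ^ q ≤ 2 * A ^ q * C * P := by
    have h2 : (2 : ℝ) ^ m * S ^ q ≤ A ^ q * (2 ^ m * (1 / (2 * A ^ q) * S ^ q + C * P)) := by
      calc (2 : ℝ) ^ m * S ^ q = ∑ T ∈ (Finset.range m).powerset, S ^ q := by simp
        _ ≤ ∑ T ∈ (Finset.range m).powerset,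
            A ^ q * ‖∑ k ∈ Finset.range m, signOf T k • g k‖ ^ q := by
            refine Finset.sum_le_sum fun T _ => ?_
            rw [← Real.mul_rpow hA0.le (norm_nonneg _)]
            exact Real.rpow_le_rpow hS0 (hsign T) hq0.le
        _ ≤ _ := by
            rw [← Finset.mul_sum]
            have := H m g
            simp only [hgn] at this
            gcongr
    have h3 : A ^ q * (2 ^ m * (1 / (2 * A ^ q) * S ^ q + C * P))
        = 2 ^ m * (S ^ q / 2 + A ^ q * C * P) := by
      field_simp
    rw [h3] at h2
    have := le_of_mul_le_mul_left h2 (by positivity)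
    linarith
  have hSP' : S ≤ (2 * A ^ q * C) ^ (1 / q) * P ^ (1 / q) := by
    rw [← Real.mul_rpow (by positivity) hP0, one_div]
    exact (Real.le_rpow_inv_iff_of_pos hS0 (by positivity) hq0).2 hSP
  constructor
  · have h := habs m α
    have hM : A ≤ max A ((2 * A ^ q * C) ^ (1 / q)) := le_max_left _ _
    rw [one_div_mul_eq_div, div_le_iff₀ (hA0.trans_le hM), mul_comm]
    exact (hPS'.trans h).trans (by gcongr)
  · refine (norm_sum_le_norm_sum_abs g m).trans (hSP'.trans ?_)
    gcongr
    exact le_max_right _ _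
end

section
/- Let (x_k) be a sequence of nonzero elements of ℓ∞ (the Banach lattice of bounded real sequences with the supremum norm and pointwise order) such that each x_k lies in c₀, i.e., x_k(n) → 0 as n → ∞, and such that (x_k) satisfies the basis inequality with some constant K ≥ 1. Let (α_k) be a scalar sequence and suppose the partial sums s_m = ∑_{k=1}^m α_k x_k σ-order converge to 0 in ℓ∞: there exists an antitone sequence (u_j) in ℓ∞ with infimum 0 in the lattice ℓ∞ such that for every j there is N with |s_m| ≤ u_j for all m ≥ N. Then α_k = 0 for every k. -/
open Filter Topology
open scoped BoundedContinuousFunction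

/-!
The partial sums `s_m` form an eventually norm-bounded sequence in `c₀`, and σ-order convergence
forces `s_m → 0` at every coordinate (`exists_apply_lt_of_isGLB`). Such a sequence is weakly null
in `c₀`, and the `n`-th basis projection maps `s_m` to `s_n` for `m ≥ n`, so `s_n = 0`.

Duality is avoided by a gliding hump (`exists_hump_sum`): a sum of `r` suitably sparse terms of
`(s_m)` has norm at most `M + ε` with `M` independent of `r`, while its `n`-th basis projection
is `r • s_n`. The basis inequality then gives `r ‖s_n‖ ≤ K (M + ε)` for all `r`, whence `s_n = 0`.
-/

/-- An infimum equal to `0` in `ℓ∞` is computed coordinatewise: otherwise a positive multiple of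
the indicator of `{p}` would be a lower bound. -/
lemma exists_apply_lt_of_isGLB {u : ℕ → (ℕ →ᵇ ℝ)} (hu : IsGLB (Set.range u) 0) (p : ℕ)
    {δ : ℝ} (hδ : 0 < δ) : ∃ j, u j p < δ := by
  by_contra! h
  let e : ℕ →ᵇ ℝ := BoundedContinuousFunction.ofNormedAddCommGroupDiscrete
    (fun q => if q = p then δ else 0) δ (by
      intro q
      split_ifs
      · rw [Real.norm_eq_abs, abs_of_pos hδ]
      · simpa using hδ.le)
  have he : e ∈ lowerBounds (Set.range u) := by
    rintro _ ⟨j, rfl⟩ q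
    change (if q = p then δ else 0) ≤ u j q
    split_ifs with hq
    · exact hq ▸ h j
    · exact hu.1 ⟨j, rfl⟩ q
  have h1 : (if p = p then δ else 0) ≤ (0 : ℝ) := hu.2 he p
  rw [if_pos rfl] at h1
  linarith

/-- Gliding hump: if the partial sums of `∑ α k • x k` are eventually bounded by `M` and tend to
`0` coordinatewise, some finite combination of the `x k` has its first `n` coefficients equal to
`r * α k` and norm at most `M + ε`. It is a sum of `r` partial sums, each new one being
small where the sum of the previous ones is not. -/
lemma exists_hump_sum (x : ℕ → (ℕ →ᵇ ℝ))
    (hc0 : ∀ k, Tendsto (fun n => x k n) atTop (𝓝 (0 : ℝ))) (α : ℕ → ℝ) (M : ℝ) (hM0 : 0 ≤ M)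
    (hM : ∀ᶠ m in atTop, ∀ p, |(∑ k ∈ Finset.range m, α k • x k) p| ≤ M)
    (hp : ∀ p, Tendsto (fun m => (∑ k ∈ Finset.range m, α k • x k) p) atTop (𝓝 (0 : ℝ)))
    (n r : ℕ) : ∀ ε : ℝ, 0 < ε → ∃ m ≥ n, ∃ c : ℕ → ℝ, (∀ k < n, c k = r * α k) ∧
      ‖∑ k ∈ Finset.range m, c k • x k‖ ≤ M + ε := by
  induction r with
  | zero =>
    intro ε hε
    refine ⟨n, le_rfl, fun _ => 0, by simp, ?_⟩
    simp only [zero_smul, Finset.sum_const_zero, norm_zero]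
    positivity
  | succ r ih =>
    intro ε hε
    obtain ⟨m, hmn, c, hc, hcM⟩ := ih (ε / 2) (by positivity)
    set f : ℕ →ᵇ ℝ := ∑ k ∈ Finset.range m, c k • x k with hf
    have hf0 : Tendsto (fun q => f q) atTop (𝓝 (0 : ℝ)) := by
      have := tendsto_finsetSum (Finset.range m) (fun k _ => (hc0 k).const_mul (c k))
      simpa [hf, BoundedContinuousFunction.coe_sum] using this
    have hsmall : ∀ g : ℕ → ℝ, Tendsto g atTop (𝓝 0) → ∀ᶠ q in atTop, |g q| ≤ ε / 2 := by
      intro g hg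
      have := hg.abs
      rw [abs_zero] at this
      exact this.eventually_le_const (by positivity)
    obtain ⟨N, hN⟩ := eventually_atTop.1 (hsmall _ hf0)
    have hlow : ∀ᶠ m' in atTop, ∀ p ∈ Finset.range N,
        |(∑ k ∈ Finset.range m', α k • x k) p| ≤ ε / 2 :=
      (Finset.eventually_all _).2 fun p _ => hsmall _ (hp p)
    obtain ⟨m', hm'1, hm'2, hm'⟩ := (hM.and (hlow.and (eventually_ge_atTop m))).exists
    refine ⟨m', hmn.trans hm', fun k => (if k < m then c k else 0) + α k, ?_, ?_⟩
    · intro k hk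
      beta_reduce
      rw [if_pos (hk.trans_le hmn), hc k hk]
      push_cast
      ring
    · have hsum : ∑ k ∈ Finset.range m', ((if k < m then c k else 0) + α k) • x k
          = f + ∑ k ∈ Finset.range m', α k • x k := by
        simp only [add_smul, Finset.sum_add_distrib]
        congr 1
        rw [hf, ← Finset.sum_subset (Finset.range_mono hm')]
        · refine Finset.sum_congr rfl fun k hk => ?_
          rw [if_pos (Finset.mem_range.1 hk)]
        · intro k _ hk
          rw [if_neg (fun h => hk (Finset.mem_range.2 h)), zero_smul]
      rw [hsum, BoundedContinuousFunction.norm_le (by positivity)]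
      intro p
      rw [BoundedContinuousFunction.add_apply, Real.norm_eq_abs]
      refine (abs_add_le _ _).trans ?_
      rcases lt_or_ge p N with h | h
      · have h1 := hm'2 p (Finset.mem_range.2 h)
        have h2 := (f.norm_coe_le_norm p).trans hcM
        rw [Real.norm_eq_abs] at h2
        linarith
      · have h1 := hN p h
        have h2 := hm'1 p
        linarith

/-- Here `ℓ∞` is modelled as `ℕ →ᵇ ℝ`, the Banach lattice of bounded
(automatically continuous, since `ℕ` is discrete) real sequences with the supremum norm and
pointwise order.  Let `(x_k)` be a sequence of nonzero elements of `ℓ∞`, each lying in `c₀`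
(i.e. `x k n → 0` as `n → ∞`), satisfying the basis inequality with some constant `K ≥ 1`.
If the partial sums `s_m = ∑_{k=1}^m α_k x_k` σ-order converge to `0` in `ℓ∞` — i.e. there is
an antitone sequence `(u_j)` with infimum `0` in `ℓ∞` such that for every `j`, `|s_m| ≤ u_j`
for all sufficiently large `m` — then `α_k = 0` for every `k`. -/
theorem stmt19 (x : ℕ → (ℕ →ᵇ ℝ)) (hx0 : ∀ k, x k ≠ 0)
    (hc0 : ∀ k, Tendsto (fun n => x k n) atTop (𝓝 (0 : ℝ)))
    (K : ℝ) (hK : 1 ≤ K)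
    (hbasis : ∀ (n m : ℕ), n ≤ m → ∀ α : ℕ → ℝ,
      ‖∑ k ∈ Finset.range n, α k • x k‖ ≤ K * ‖∑ k ∈ Finset.range m, α k • x k‖)
    (α : ℕ → ℝ)
    (hso : ∃ u : ℕ → (ℕ →ᵇ ℝ), Antitone u ∧ IsGLB (Set.range u) 0 ∧
      ∀ j : ℕ, ∃ N : ℕ, ∀ m ≥ N, |∑ k ∈ Finset.range m, α k • x k| ≤ u j) :
    ∀ k, α k = 0 := by
  obtain ⟨u, -, hglb, hu⟩ := hso
  have hdom : ∀ j, ∀ᶠ m in atTop, ∀ p, |(∑ k ∈ Finset.range m, α k • x k) p| ≤ u j p := by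
    intro j
    obtain ⟨N, hN⟩ := hu j
    exact eventually_atTop.2 ⟨N, fun m hm p => hN m hm p⟩
  have hM : ∀ᶠ m in atTop, ∀ p, |(∑ k ∈ Finset.range m, α k • x k) p| ≤ ‖u 0‖ :=
    (hdom 0).mono fun m hm p => (hm p).trans ((le_abs_self _).trans ((u 0).norm_coe_le_norm p))
  have hp : ∀ p, Tendsto (fun m => (∑ k ∈ Finset.range m, α k • x k) p) atTop (𝓝 (0 : ℝ)) := by
    intro p
    rw [Metric.tendsto_nhds]
    intro δ hδ
    obtain ⟨j, hj⟩ := exists_apply_lt_of_isGLB hglb p hδ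
    filter_upwards [hdom j] with m hm
    rw [Real.dist_0_eq_abs]
    exact (hm p).trans_lt hj
  have hs : ∀ n, ∑ k ∈ Finset.range n, α k • x k = 0 := by
    intro n
    by_contra hne
    have hpos := norm_pos_iff.2 hne
    obtain ⟨r, hr⟩ := exists_nat_gt (K * (‖u 0‖ + 1) / ‖∑ k ∈ Finset.range n, α k • x k‖)
    rw [div_lt_iff₀ hpos] at hr
    obtain ⟨m, hm, c, hc, hcM⟩ :=
      exists_hump_sum x hc0 α ‖u 0‖ (norm_nonneg _) hM hp n r 1 one_pos
    have hb := hbasis n m hm c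
    have hproj : ∑ k ∈ Finset.range n, c k • x k
        = (r : ℝ) • ∑ k ∈ Finset.range n, α k • x k := by
      rw [Finset.smul_sum]
      refine Finset.sum_congr rfl fun k hk => ?_
      rw [hc k (Finset.mem_range.1 hk), mul_smul]
    rw [hproj, norm_smul, Real.norm_natCast] at hb
    have := mul_le_mul_of_nonneg_left hcM (zero_le_one.trans hK)
    linarith
  intro k
  have h := hs (k + 1)
  rw [Finset.sum_range_succ, hs k, zero_add] at h
  exact (smul_eq_zero.1 h).resolve_right (hx0 k)
end
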